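/- If X is a metric space and D is an upper semi-continuous decomposition of X, then the decomposition space X_D is metrizable; moreover, if X is separable then X_D is separable. -/

import Mathlib

open Set Filter Topology Uniformity

/-- A T₀ space is metrizable as soon as its topology comes from an antitone sequence of reflexive
symmetric relations, each of which contains the square of its successor. -/
theorem metrizableSpace_of_antitone_entourages {Y : Type*} [TopologicalSpace Y] [T0Space Y]
    (E : ℕ → SetRel Y Y) (hanti : Antitone E) (hrefl : ∀ k y, (y, y) ∈ E k)
    (hsymm : ∀ k y z, (y, z) ∈ E k → (z, y) ∈ E k)
    (hcomp : ∀ k x y z, (x, y) ∈ E (k + 1) → (y, z) ∈ E (k + 1) → (x, z) ∈ E k)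
    (hnhds : ∀ y, (𝓝 y).HasBasis (fun _ => True) fun k => {z | (y, z) ∈ E k}) :
    TopologicalSpace.MetrizableSpace Y := by
  have hbasis : (⨅ k, 𝓟 (E k)).HasAntitoneBasis E := .iInf_principal hanti
  let core : UniformSpace.Core Y :=
    { uniformity := ⨅ k, 𝓟 (E k)
      refl := hbasis.1.ge_iff.2 fun k _ => by
        rintro ⟨x, y⟩ (rfl : x = y)
        exact hrefl k x
      symm := (hbasis.1.tendsto_iff hbasis.1).2 fun k _ =>
        ⟨k, trivial, fun p hp => hsymm k p.1 p.2 hp⟩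
      comp := ((hbasis.1.lift' (monotone_id.relComp monotone_id)).le_basis_iff hbasis.1).2
        fun k _ => ⟨k + 1, trivial, by
          rintro ⟨x, z⟩ ⟨y, hxy, hyz⟩
          exact hcomp k x y z hxy hyz⟩ }
  let _ : UniformSpace Y := .ofCoreEq core inferInstance <|
    TopologicalSpace.ext_nhds fun y => by
      rw [core.nhds_toTopologicalSpace]
      exact (hnhds y).eq_of_same_basis (hbasis.1.comap (Prod.mk y))
  have : IsCountablyGenerated (𝓤 Y) := hbasis.1.isCountablyGenerated
  exact UniformSpace.metrizableSpace

/-- **Frink's metrization theorem**: a T₀ space is metrizable if every point `y` has an antitone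
neighbourhood basis `U n y` such that for all `y` and `n` there is an `m` for which every `U m z`
meeting `U m y` is contained in `U n y`. -/
theorem metrizableSpace_of_frink {Y : Type*} [TopologicalSpace Y] [T0Space Y]
    (U : ℕ → Y → Set Y) (hU : ∀ y, (𝓝 y).HasAntitoneBasis (U · y))
    (hfrink : ∀ y n, ∃ m, ∀ z, (U m z ∩ U m y).Nonempty → U m z ⊆ U n y) :
    TopologicalSpace.MetrizableSpace Y := by
  choose m hm using hfrink
  have hmem (n : ℕ) (y : Y) : y ∈ U n y := mem_of_mem_nhds ((hU y).mem n)
  have hmeet {y z : Y} {n p : ℕ} (hp : m y n ≤ p) (h : (U p z ∩ U p y).Nonempty) :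
      U p z ⊆ U n y :=
    ((hU z).antitone hp).trans <|
      hm y n z (h.mono (inter_subset_inter ((hU z).antitone hp) ((hU y).antitone hp)))
  let N (y : Y) : ℕ → ℕ := Nat.rec 0 fun _ p => max (m y p) p + 1
  have hNm (y : Y) (k : ℕ) : m y (N y k) ≤ N y (k + 1) :=
    (le_max_left _ _).trans (Nat.le_succ _)
  have hNlt (y : Y) : StrictMono (N y) :=
    strictMono_nat_of_lt_succ fun k => Nat.lt_succ_of_le (le_max_right _ _)
  let V (k : ℕ) (y : Y) : Set Y := U (N y k) y
  have hVanti (y : Y) : Antitone (V · y) := (hU y).antitone.comp_monotone (hNlt y).monotone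
  have hVU (k : ℕ) (y : Y) : V k y ⊆ U k y := (hU y).antitone (hNlt y).le_apply
  have hV_meet_of_le {k : ℕ} {x y : Y} (hle : N y (k + 1) ≤ N x (k + 1))
      (h : (V (k + 1) x ∩ V (k + 1) y).Nonempty) : V (k + 1) x ⊆ V k y := by
    have hsub : V (k + 1) x ⊆ U (N y (k + 1)) x := (hU x).antitone hle
    exact hsub.trans (hmeet (hNm y k) (h.mono (inter_subset_inter_left _ hsub)))
  refine metrizableSpace_of_antitone_entourages
    (fun k => {p | ∃ w, p.1 ∈ V k w ∧ p.2 ∈ V k w}) ?_ ?_ ?_ ?_ ?_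
  · rintro k l hkl p ⟨w, h₁, h₂⟩
    exact ⟨w, hVanti w hkl h₁, hVanti w hkl h₂⟩
  · exact fun k y => ⟨y, hmem _ y, hmem _ y⟩
  · rintro k y z ⟨w, hy, hz⟩
    exact ⟨w, hz, hy⟩
  · rintro k x y z ⟨v, hxv, hyv⟩ ⟨w, hyw, hzw⟩
    rcases le_total (N w (k + 1)) (N v (k + 1)) with hle | hle
    · exact ⟨w, hV_meet_of_le hle ⟨y, hyv, hyw⟩ hxv, hVanti w k.le_succ hzw⟩
    · exact ⟨v, hVanti v k.le_succ hxv, hV_meet_of_le hle ⟨y, hyw, hyv⟩ hzw⟩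
  · intro y
    refine (hU y).1.to_hasBasis (fun n _ => ⟨m y n, trivial, ?_⟩) fun k _ =>
      ⟨N y k, trivial, fun z hz => ⟨y, hmem _ y, hz⟩⟩
    rintro z ⟨w, hyw, hzw⟩
    exact hm y n w ⟨y, hVU _ w hyw, hmem _ y⟩ (hVU _ w hzw)

/-- The image of a metric space under a continuous closed surjection with compact fibres is
metrizable. -/
theorem IsClosedMap.metrizableSpace_of_isCompact_fibers {X Y : Type*} [MetricSpace X]
    [TopologicalSpace Y] {f : X → Y} (hf : IsClosedMap f) (hcont : Continuous f)
    (hsurj : Function.Surjective f) (hcompact : ∀ y, IsCompact (f ⁻¹' {y})) :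
    TopologicalSpace.MetrizableSpace Y := by
  have : T1Space Y := ⟨hsurj.forall.2 fun x => by simpa using hf _ (isClosed_singleton (x := x))⟩
  let r (n : ℕ) : ℝ := 1 / ((n : ℝ) + 1)
  have hr (n : ℕ) : 0 < r n := Nat.one_div_pos_of_nat
  have hranti : Antitone r := fun _ _ h => Nat.one_div_le_one_div h
  have hrlim {ε : ℝ} (hε : 0 < ε) : ∃ n, r n < ε := exists_nat_one_div_lt hε
  let U (n : ℕ) (y : Y) : Set Y := kernImage f (Metric.thickening (r n) (f ⁻¹' {y}))
  have hmemU {n : ℕ} {y z : Y} :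
      z ∈ U n y ↔ ∀ x, f x = z → ∃ x', f x' = y ∧ dist x x' < r n := by
    simp [U, kernImage, Metric.mem_thickening_iff]
  have hU (y : Y) : (𝓝 y).HasAntitoneBasis (U · y) := by
    refine ⟨⟨fun t => ⟨fun ht => ?_, ?_⟩⟩, fun k n hkn => ?_⟩
    · obtain ⟨δ, hδ, hsub⟩ := (hcompact y).exists_thickening_subset_open
        (isOpen_interior.preimage hcont)
        (preimage_mono (singleton_subset_iff.2 (mem_interior_iff_mem_nhds.2 ht)))
      obtain ⟨n, hn⟩ := hrlim hδ
      refine ⟨n, trivial, hsurj.forall.2 fun x hx => interior_subset ?_⟩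
      exact hsub (Metric.thickening_mono hn.le _ (hx rfl))
    · rintro ⟨n, -, hn⟩
      refine mem_of_superset ?_ hn
      refine (isClosedMap_iff_kernImage.1 hf Metric.isOpen_thickening).mem_nhds ?_
      exact hmemU.2 fun x hx => ⟨x, hx, by simpa using hr n⟩
    · exact fun z hz x hx => Metric.thickening_mono (hranti hkn) _ (hz hx)
  refine metrizableSpace_of_frink U hU fun y n => ?_
  obtain ⟨k, hk⟩ := hrlim (half_pos (hr n))
  obtain ⟨δ, hδ, hsub⟩ := (hcompact y).exists_thickening_subset_open
    (isOpen_interior.preimage hcont)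
    (preimage_mono (singleton_subset_iff.2 (mem_interior_iff_mem_nhds.2 ((hU y).mem k))))
  obtain ⟨l, hl⟩ := hrlim (half_pos hδ)
  refine ⟨max k l, fun z ⟨w, hwz, hwy⟩ v hv => hmemU.2 fun a ha => ?_⟩
  have hrk : r (max k l) ≤ r k := hranti (le_max_left _ _)
  have hrl : r (max k l) ≤ r l := hranti (le_max_right _ _)
  have hz : z ∈ U k y := by
    obtain ⟨x, rfl⟩ := hsurj w
    obtain ⟨b, rfl, hb⟩ := hmemU.1 hwz x rfl
    obtain ⟨c, hc, hxc⟩ := hmemU.1 hwy x rfl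
    refine interior_subset (hsub (Metric.mem_thickening_iff.2 ⟨c, hc, ?_⟩))
    linarith [dist_triangle_left b c x]
  obtain ⟨b, hb, hab⟩ := hmemU.1 hv a ha
  obtain ⟨c, hc, hbc⟩ := hmemU.1 hz b hb
  exact ⟨c, hc, by linarith [dist_triangle a b c]⟩


/-- If `X` is a metric space and `s` an upper semi-continuous decomposition of `X`
(compact elements, closed quotient map), then the decomposition space is metrizable;
moreover if `X` is separable then so is the decomposition space. -/
theorem decomposition_space_metrizable {X : Type*} [MetricSpace X] (s : Setoid X)
    (hcompact : ∀ x : X, IsCompact {y : X | s.r x y})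
    (hclosedmap : IsClosedMap (Quotient.mk s)) :
    TopologicalSpace.MetrizableSpace (Quotient s) ∧
      (TopologicalSpace.SeparableSpace X → TopologicalSpace.SeparableSpace (Quotient s)) := by
  refine ⟨hclosedmap.metrizableSpace_of_isCompact_fibers continuous_quotient_mk'
    Quotient.mk_surjective (Quotient.mk_surjective.forall.2 fun x => ?_), fun _ => inferInstance⟩
  convert hcompact x using 1
  ext y
  exact Quotient.eq.trans ⟨s.symm, s.symm⟩
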